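/- Assume that the undirected graph on {1,…,N} with an edge {i,j} whenever a(i,j) > 0 is connected, that for every i the local matrix Qi = Fiᵀ·Pi + Pi·Fi is negative semidefinite, and that k3i ≠ 0 for every i. Then the closed-loop microgrid matrix 𝐅 is Hurwitz: every complex eigenvalue of 𝐅 has strictly negative real part (equivalently, the origin of the linear system ẋ = 𝐅x is asymptotically stable). -/

import Mathlib

/-!
The quadratic form of `𝐏 = diag(P₁, …, P_N)` is a Lyapunov function: since `ηᵢ = σ̄·Ctᵢ`, the
lines contribute `-2σ̄·(L ⊗ E11)` to `𝐅ᵀ𝐏 + 𝐏𝐅`, where `L` is the weighted Laplacian of the line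
conductances, and both this and the local contribution `diag(Q₁, …, Q_N)` are negative
semidefinite. On an eigenvector `x` whose eigenvalue `μ` has nonnegative real part both forms must
therefore vanish, so `L ⊗ E11` kills `x`: no net current enters a node from the lines, and the
nodes decouple into `Fᵢxᵢ = μxᵢ` with `Qᵢxᵢ = 0`. The `(1,1)` entry of `Qᵢ` is zero, so
semidefiniteness forces its first row to vanish and its lower block to be singular; what is left of
the kernel of `Qᵢ` contains no eigenvector of `Fᵢ`.
-/

open Matrix

/-- The 3×3 matrix with `(1,1)` entry equal to `1` and all other entries zero. -/
noncomputable def E11 : Matrix (Fin 3) (Fin 3) ℝ := !![1, 0, 0; 0, 0, 0; 0, 0, 0]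

lemma exists_mulVec_eq_smul_of_mem_spectrum {n K : Type*} [Field K] [Fintype n] [DecidableEq n]
    {A : Matrix n n K} {μ : K} (hμ : μ ∈ spectrum K A) : ∃ x ≠ 0, A *ᵥ x = μ • x := by
  rw [← spectrum_toLin'] at hμ
  obtain ⟨x, hx⟩ := (Module.End.HasEigenvalue.of_mem_spectrum hμ).exists_hasEigenvector
  exact ⟨x, hx.2, by simpa using hx.apply_eq_smul⟩

section PosSemidef

open scoped ComplexOrder MatrixOrder

variable {n 𝕜 : Type*} [RCLike 𝕜]

lemma posSemidef_map_ofReal [Finite n] {M : Matrix n n ℝ} (hM : M.PosSemidef) :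
    (M.map Complex.ofReal).PosSemidef := by
  classical
  have := Fintype.ofFinite n
  obtain ⟨B, rfl⟩ := CStarAlgebra.nonneg_iff_eq_star_mul_self.mp hM.nonneg
  have hfactor : (star B * B).map Complex.ofReal =
      (B.map Complex.ofReal)ᴴ * B.map Complex.ofReal := by
    ext i j
    simp [mul_apply]
  rw [hfactor]
  exact posSemidef_conjTranspose_mul_self _

lemma sq_apply_le_diag_mul_diag {M : Matrix n n ℝ} (hM : M.PosSemidef) (i j : n) :
    M i j ^ 2 ≤ M i i * M j j := by
  have hminor := (hM.submatrix ![i, j]).det_nonneg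
  have hsymm : M j i = M i j := by simpa using hM.1.apply i j
  rw [det_fin_two] at hminor
  simp only [submatrix_apply, cons_val_zero, cons_val_one, hsymm] at hminor
  linarith

lemma mulVec_eq_zero_of_add_mulVec_eq_zero [Fintype n] {A B : Matrix n n 𝕜}
    (hA : A.PosSemidef) (hB : B.PosSemidef) {x : n → 𝕜} (hx : (A + B) *ᵥ x = 0) :
    A *ᵥ x = 0 ∧ B *ᵥ x = 0 := by
  have hsum : star x ⬝ᵥ A *ᵥ x + star x ⬝ᵥ B *ᵥ x = 0 := by
    rw [← dotProduct_add, ← add_mulVec, hx, dotProduct_zero]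
  rw [add_eq_zero_iff_of_nonneg (hA.dotProduct_mulVec_nonneg x) (hB.dotProduct_mulVec_nonneg x),
    hA.dotProduct_mulVec_zero_iff, hB.dotProduct_mulVec_zero_iff] at hsum
  exact hsum

end PosSemidef

section Lyapunov

open scoped ComplexOrder

variable {n R 𝕜 : Type*} [Fintype n] [RCLike 𝕜]

/-- The Lyapunov operator `P ↦ Aᴴ P + P A` of `A`: along `ẋ = A x`, the derivative of `xᴴ P x` is
`xᴴ (lyapunovMatrix A P) x`. -/
def lyapunovMatrix [NonUnitalNonAssocSemiring R] [Star R] (A P : Matrix n n R) : Matrix n n R :=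
  Aᴴ * P + P * A

lemma lyapunovMatrix_map_ofReal (A P : Matrix n n ℝ) :
    (lyapunovMatrix A P).map Complex.ofReal =
      lyapunovMatrix (A.map Complex.ofReal) (P.map Complex.ofReal) := by
  ext i j
  simp [lyapunovMatrix, mul_apply]

lemma posSemidef_neg_lyapunovMatrix {A P : Matrix n n ℝ} (hP : P.IsHermitian)
    (h : ∀ v : n → ℝ, v ⬝ᵥ (Aᵀ * P + P * A) *ᵥ v ≤ 0) : (-lyapunovMatrix A P).PosSemidef := by
  refine .of_dotProduct_mulVec_nonneg ?_ fun v ↦ ?_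
  · rw [IsHermitian, conjTranspose_neg, lyapunovMatrix, conjTranspose_add, conjTranspose_mul,
      conjTranspose_mul, conjTranspose_conjTranspose, hP.eq, add_comm]
  · rw [lyapunovMatrix, conjTranspose_eq_transpose_of_trivial, star_trivial, neg_mulVec,
      dotProduct_neg]
    exact neg_nonneg.mpr (h v)

lemma dotProduct_lyapunovMatrix_mulVec {A P : Matrix n n 𝕜} {x : n → 𝕜} {μ : 𝕜}
    (hx : A *ᵥ x = μ • x) :
    star x ⬝ᵥ lyapunovMatrix A P *ᵥ x = (star μ + μ) * (star x ⬝ᵥ P *ᵥ x) := by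
  have hleft : star x ⬝ᵥ (Aᴴ * P) *ᵥ x = star μ * (star x ⬝ᵥ P *ᵥ x) := by
    rw [← mulVec_mulVec, dotProduct_mulVec, ← star_mulVec, hx, star_smul, smul_dotProduct,
      smul_eq_mul]
  have hright : star x ⬝ᵥ (P * A) *ᵥ x = μ * (star x ⬝ᵥ P *ᵥ x) := by
    rw [← mulVec_mulVec, hx, mulVec_smul, dotProduct_smul, smul_eq_mul]
  rw [lyapunovMatrix, add_mulVec, dotProduct_add, hleft, hright, add_mul]

lemma lyapunovMatrix_mulVec_eq_zero {A P : Matrix n n 𝕜} (hP : P.PosSemidef)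
    (hQ : (-lyapunovMatrix A P).PosSemidef) {x : n → 𝕜} {μ : 𝕜} (hx : A *ᵥ x = μ • x)
    (hμ : 0 ≤ RCLike.re μ) : lyapunovMatrix A P *ᵥ x = 0 := by
  have hμ' : 0 ≤ star μ + μ := by
    rw [add_comm, RCLike.star_def, RCLike.add_conj]
    exact_mod_cast mul_nonneg zero_le_two hμ
  have hform : 0 ≤ star x ⬝ᵥ lyapunovMatrix A P *ᵥ x := by
    rw [dotProduct_lyapunovMatrix_mulVec hx]
    exact mul_nonneg hμ' (hP.dotProduct_mulVec_nonneg x)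
  have hneg : star x ⬝ᵥ (-lyapunovMatrix A P) *ᵥ x = 0 := by
    refine le_antisymm ?_ (hQ.dotProduct_mulVec_nonneg x)
    simpa [neg_mulVec] using hform
  rw [hQ.dotProduct_mulVec_zero_iff, neg_mulVec] at hneg
  exact neg_eq_zero.mp hneg

lemma neg_lyapunovMatrix_sub_mul {A B P K : Matrix n n 𝕜} {σ : ℝ} (hP : P.IsHermitian)
    (hK : K.IsHermitian) (hPBK : P * B * K = σ • K) :
    -lyapunovMatrix (A - B * K) P = -lyapunovMatrix A P + (2 * σ) • K := by
  have hadj : (B * K)ᴴ * P = σ • K := by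
    rw [← conjTranspose_inj, conjTranspose_mul, conjTranspose_conjTranspose, hP.eq,
      ← Matrix.mul_assoc, hPBK, conjTranspose_smul, hK.eq, star_trivial]
  rw [lyapunovMatrix, lyapunovMatrix, conjTranspose_sub, Matrix.sub_mul, hadj, Matrix.mul_sub,
    ← Matrix.mul_assoc, hPBK, two_mul, add_smul]
  abel

lemma eigenvector_of_passive_feedback {A B P K : Matrix n n 𝕜} (hP : P.PosSemidef)
    (hQ : (-lyapunovMatrix A P).PosSemidef) (hK : K.PosSemidef) {σ : ℝ} (hσ : 0 < σ)
    (hPBK : P * B * K = σ • K) {x : n → 𝕜} {μ : 𝕜} (hx : (A - B * K) *ᵥ x = μ • x)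
    (hμ : 0 ≤ RCLike.re μ) : A *ᵥ x = μ • x ∧ lyapunovMatrix A P *ᵥ x = 0 := by
  have hσK : ((2 * σ) • K).PosSemidef := hK.smul (by positivity)
  have hsplit := neg_lyapunovMatrix_sub_mul (A := A) hP.1 hK.1 hPBK
  have hker := lyapunovMatrix_mulVec_eq_zero hP (hsplit ▸ hQ.add hσK) hx hμ
  rw [← neg_eq_zero, ← neg_mulVec, hsplit] at hker
  obtain ⟨hAx, hKx⟩ := mulVec_eq_zero_of_add_mulVec_eq_zero hQ hσK hker
  have hKx' : K *ᵥ x = 0 := by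
    simpa [smul_mulVec, hσ.ne'] using hKx
  constructor
  · rwa [sub_mulVec, ← mulVec_mulVec, hKx', mulVec_zero, sub_zero] at hx
  · simpa [neg_mulVec] using hAx

lemma eigenvector_map_ofReal_of_passive_feedback {A B P K : Matrix n n ℝ} (hP : P.PosSemidef)
    (hQ : (-lyapunovMatrix A P).PosSemidef) (hK : K.PosSemidef) {σ : ℝ} (hσ : 0 < σ)
    (hPBK : P * B * K = σ • K) {x : n → ℂ} {μ : ℂ}
    (hx : (A - B * K).map Complex.ofReal *ᵥ x = μ • x) (hμ : 0 ≤ μ.re) :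
    A.map Complex.ofReal *ᵥ x = μ • x ∧ (lyapunovMatrix A P).map Complex.ofReal *ᵥ x = 0 := by
  rw [lyapunovMatrix_map_ofReal]
  refine eigenvector_of_passive_feedback (posSemidef_map_ofReal hP) ?_ (posSemidef_map_ofReal hK)
    hσ (B := B.map Complex.ofReal) ?_ ?_ hμ
  · rw [← lyapunovMatrix_map_ofReal]
    simpa [Matrix.map_neg] using posSemidef_map_ofReal hQ
  · ext i j
    simpa [mul_apply] using congrArg Complex.ofReal (congrFun₂ hPBK i j)
  · convert hx using 2
    ext i j
    simp [mul_apply]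

end Lyapunov

section NodeBlockDiagonal

open scoped Kronecker ComplexOrder MatrixOrder

variable {ι κ R S 𝕜 : Type*} [DecidableEq ι] [RCLike 𝕜]

/-- The block-diagonal matrix with diagonal blocks `M i`, indexed with the block index first
(`Matrix.blockDiagonal` puts it second). -/
def nodeBlockDiagonal [Zero R] (M : ι → Matrix κ κ R) : Matrix (ι × κ) (ι × κ) R :=
  comp ι ι κ κ R (diagonal M)

lemma nodeBlockDiagonal_apply [Zero R] (M : ι → Matrix κ κ R) (p q : ι × κ) :
    nodeBlockDiagonal M p q = if p.1 = q.1 then M p.1 p.2 q.2 else 0 := by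
  rw [nodeBlockDiagonal, comp_apply, diagonal_apply]
  split_ifs <;> rfl

lemma nodeBlockDiagonal_map [Zero R] [Zero S] (M : ι → Matrix κ κ R) {f : R → S} (hf : f 0 = 0) :
    (nodeBlockDiagonal M).map f = nodeBlockDiagonal fun i ↦ (M i).map f := by
  ext p q
  simp [nodeBlockDiagonal_apply, apply_ite f, hf]

lemma nodeBlockDiagonal_neg [NegZeroClass R] (M : ι → Matrix κ κ R) :
    -nodeBlockDiagonal M = nodeBlockDiagonal fun i ↦ -M i :=
  nodeBlockDiagonal_map M neg_zero

lemma nodeBlockDiagonal_add [AddZeroClass R] (M M' : ι → Matrix κ κ R) :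
    nodeBlockDiagonal M + nodeBlockDiagonal M' = nodeBlockDiagonal fun i ↦ M i + M' i := by
  simp only [nodeBlockDiagonal, ← compAddEquiv_apply, ← map_add, diagonal_add]

lemma nodeBlockDiagonal_conjTranspose [AddMonoid R] [StarAddMonoid R] (M : ι → Matrix κ κ R) :
    (nodeBlockDiagonal M)ᴴ = nodeBlockDiagonal fun i ↦ (M i)ᴴ := by
  ext ⟨i, k⟩ ⟨j, l⟩
  obtain rfl | hij := eq_or_ne i j
  · simp [nodeBlockDiagonal_apply]
  · simp [nodeBlockDiagonal_apply, hij, hij.symm]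

section Multiplication

variable [Fintype ι] [Fintype κ]

lemma nodeBlockDiagonal_mul [NonUnitalNonAssocSemiring R] (M M' : ι → Matrix κ κ R) :
    nodeBlockDiagonal M * nodeBlockDiagonal M' = nodeBlockDiagonal fun i ↦ M i * M' i := by
  simp only [nodeBlockDiagonal, ← compRingEquiv_apply, ← map_mul, diagonal_mul_diagonal]

lemma nodeBlockDiagonal_mulVec_apply [NonUnitalNonAssocSemiring R] (M : ι → Matrix κ κ R)
    (x : ι × κ → R) (i : ι) (k : κ) :
    (nodeBlockDiagonal M *ᵥ x) (i, k) = (M i *ᵥ fun l ↦ x (i, l)) k := by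
  simp [mulVec, dotProduct, nodeBlockDiagonal_apply, Fintype.sum_prod_type, ite_mul,
    Finset.sum_ite_irrel]

lemma nodeBlockDiagonal_mul_kronecker [CommSemiring R] {M : ι → Matrix κ κ R} {E T : Matrix κ κ R}
    (hM : ∀ i, M i * E = T) (L : Matrix ι ι R) : nodeBlockDiagonal M * (L ⊗ₖ E) = L ⊗ₖ T := by
  ext ⟨i, k⟩ ⟨j, l⟩
  simp [mul_apply, nodeBlockDiagonal_apply, Fintype.sum_prod_type, ite_mul, Finset.sum_ite_irrel,
    ← hM i, Finset.mul_sum, mul_left_comm]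

lemma lyapunovMatrix_nodeBlockDiagonal [NonUnitalNonAssocSemiring R] [StarRing R]
    (A P : ι → Matrix κ κ R) :
    lyapunovMatrix (nodeBlockDiagonal A) (nodeBlockDiagonal P) =
      nodeBlockDiagonal fun i ↦ lyapunovMatrix (A i) (P i) := by
  simp only [lyapunovMatrix, nodeBlockDiagonal_conjTranspose, nodeBlockDiagonal_mul,
    nodeBlockDiagonal_add]

end Multiplication

lemma posSemidef_nodeBlockDiagonal [Finite ι] [Finite κ] {M : ι → Matrix κ κ 𝕜}
    (hM : ∀ i, (M i).PosSemidef) : (nodeBlockDiagonal M).PosSemidef := by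
  classical
  have := Fintype.ofFinite ι
  have := Fintype.ofFinite κ
  choose B hB using fun i ↦ CStarAlgebra.nonneg_iff_eq_star_mul_self.mp (hM i).nonneg
  have hfactor : nodeBlockDiagonal M = (nodeBlockDiagonal B)ᴴ * nodeBlockDiagonal B := by
    rw [nodeBlockDiagonal_conjTranspose, nodeBlockDiagonal_mul]
    exact congrArg nodeBlockDiagonal (funext hB)
  exact hfactor ▸ posSemidef_conjTranspose_mul_self _

end NodeBlockDiagonal

section Laplacian

variable {ι R : Type*} [Fintype ι] [DecidableEq ι]

/-- The Laplacian of the weighted graph with edge weights `a`. -/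
def weightedLapMatrix [AddCommGroup R] (a : ι → ι → R) : Matrix ι ι R :=
  diagonal (fun i ↦ ∑ j, a i j) - of a

lemma dotProduct_weightedLapMatrix_mulVec [CommRing R] {a : ι → ι → R}
    (ha : ∀ i j, a i j = a j i) (v : ι → R) :
    2 * (v ⬝ᵥ weightedLapMatrix a *ᵥ v) = ∑ i, ∑ j, a i j * (v i - v j) ^ 2 := by
  have hform : v ⬝ᵥ weightedLapMatrix a *ᵥ v = ∑ i, ∑ j, a i j * (v i * (v i - v j)) := by
    simp only [weightedLapMatrix, sub_mulVec, dotProduct, Pi.sub_apply, mulVec_diagonal]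
    simp only [mulVec, dotProduct, of_apply, Finset.sum_mul, ← Finset.sum_sub_distrib,
      Finset.mul_sum]
    congr! 2
    ring
  have hswap : ∑ i, ∑ j, a i j * (v i * (v i - v j)) = ∑ i, ∑ j, a i j * (v j * (v j - v i)) := by
    rw [Finset.sum_comm]
    simp only [ha]
  rw [two_mul, hform]
  nth_rw 2 [hswap]
  simp only [← Finset.sum_add_distrib]
  congr! 2
  ring

lemma posSemidef_weightedLapMatrix {a : ι → ι → ℝ} (ha : ∀ i j, a i j = a j i)
    (ha_nonneg : ∀ i j, 0 ≤ a i j) : (weightedLapMatrix a).PosSemidef := by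
  refine .of_dotProduct_mulVec_nonneg ?_ fun v ↦ ?_
  · exact (isHermitian_diagonal _).sub (.ext fun i j ↦ ha j i)
  · have hform := dotProduct_weightedLapMatrix_mulVec ha v
    have hnonneg : 0 ≤ ∑ i, ∑ j, a i j * (v i - v j) ^ 2 :=
      Finset.sum_nonneg fun i _ ↦ Finset.sum_nonneg fun j _ ↦
        mul_nonneg (ha_nonneg i j) (sq_nonneg _)
    rw [star_trivial]
    linarith

end Laplacian

section DGU

/-- The closed-loop matrix of a single generation unit with terminal capacitance `C`; `α`, `β` and
`γ` are the coefficients of voltage, current and integrator state in its current equation. -/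
noncomputable def dguMatrix (C α β γ : ℝ) : Matrix (Fin 3) (Fin 3) ℝ :=
  !![0, 1 / C, 0; α, β, γ; -1, 0, 0]

/-- The local Lyapunov matrices `Pᵢ`, in which the voltage is decoupled from the other states. -/
def structuredLyapunov (η p22 p23 p33 : ℝ) : Matrix (Fin 3) (Fin 3) ℝ :=
  !![η, 0, 0; 0, p22, p23; 0, p23, p33]

variable {C α β γ σ p22 p23 p33 : ℝ}

lemma lyapunovMatrix_dguMatrix (hC : C ≠ 0) :
    lyapunovMatrix (dguMatrix C α β γ) (structuredLyapunov (σ * C) p22 p23 p33) =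
      !![0, σ + p22 * α - p23, p23 * α - p33;
        σ + p22 * α - p23, 2 * (p22 * β), p22 * γ + p23 * β;
        p23 * α - p33, p22 * γ + p23 * β, 2 * (p23 * γ)] := by
  ext i j
  fin_cases i <;> fin_cases j <;>
    simp [lyapunovMatrix, dguMatrix, structuredLyapunov, mul_apply, Fin.sum_univ_three] <;>
    field_simp <;> ring

lemma entries_eq_of_posSemidef_neg_lyapunovMatrix (hC : C ≠ 0)
    (hQ : (-lyapunovMatrix (dguMatrix C α β γ)
      (structuredLyapunov (σ * C) p22 p23 p33)).PosSemidef) :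
    σ + p22 * α = p23 ∧ p22 * γ = p23 * β := by
  rw [lyapunovMatrix_dguMatrix hC] at hQ
  constructor
  · have hentry : p23 - (σ + p22 * α) = 0 := by
      simpa using sq_apply_le_diag_mul_diag hQ 0 1
    linarith
  · have hminor : (p22 * γ + p23 * β) ^ 2 ≤ 2 * (p22 * β) * (2 * (p23 * γ)) := by
      simpa [-neg_add_rev] using sq_apply_le_diag_mul_diag hQ 1 2
    have hdiff : (p22 * γ - p23 * β) ^ 2 ≤ 0 := by linarith
    exact sub_eq_zero.mp (pow_eq_zero_iff two_ne_zero |>.mp (hdiff.antisymm (sq_nonneg _)))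

lemma structuredLyapunov_p22_ne_zero {η : ℝ} (hP : (structuredLyapunov η p22 p23 p33).PosSemidef)
    (hσ : σ ≠ 0) (hα : σ + p22 * α = p23) : p22 ≠ 0 := by
  rintro rfl
  have hp23 : p23 = 0 := by
    simpa [structuredLyapunov] using sq_apply_le_diag_mul_diag hP 1 2
  exact hσ (by simpa [hp23] using hα)

lemma current_add_integrator_eq_zero (hC : C ≠ 0) (hα : σ + p22 * α = p23) (hβ : p22 * γ = p23 * β)
    (hp22 : p22 ≠ 0) {x : Fin 3 → ℂ} (hQx : (lyapunovMatrix (dguMatrix C α β γ)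
      (structuredLyapunov (σ * C) p22 p23 p33)).map Complex.ofReal *ᵥ x = 0) :
    (β : ℂ) * x 1 + γ * x 2 = 0 := by
  have hrow : 2 * (p22 * β) * x 1 + 2 * (p22 * γ) * x 2 = 0 := by
    simpa [lyapunovMatrix_dguMatrix hC, hα, ← hβ, ← two_mul, mulVec, dotProduct,
      Fin.sum_univ_three] using congrFun hQx 1
  have hfactor : (2 * p22 : ℂ) * (β * x 1 + γ * x 2) = 0 := by linear_combination hrow
  simpa [hp22] using hfactor

lemma dguMatrix_eigenvector_eq_zero (hC : C ≠ 0) (hγ : γ ≠ 0) (hσ : σ ≠ 0)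
    (hP : (structuredLyapunov (σ * C) p22 p23 p33).PosSemidef)
    (hQ : (-lyapunovMatrix (dguMatrix C α β γ)
      (structuredLyapunov (σ * C) p22 p23 p33)).PosSemidef)
    {x : Fin 3 → ℂ} {μ : ℂ} (hx : (dguMatrix C α β γ).map Complex.ofReal *ᵥ x = μ • x)
    (hQx : (lyapunovMatrix (dguMatrix C α β γ)
      (structuredLyapunov (σ * C) p22 p23 p33)).map Complex.ofReal *ᵥ x = 0) : x = 0 := by
  obtain ⟨hα, hβ⟩ := entries_eq_of_posSemidef_neg_lyapunovMatrix hC hQ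
  have hp22 := structuredLyapunov_p22_ne_zero hP hσ hα
  have hvoltage : (1 / C : ℂ) * x 1 = μ * x 0 := by
    simpa [dguMatrix, mulVec, dotProduct, Fin.sum_univ_three] using congrFun hx 0
  have hcurrent : (α : ℂ) * x 0 + β * x 1 + γ * x 2 = μ * x 1 := by
    simpa [dguMatrix, mulVec, dotProduct, Fin.sum_univ_three] using congrFun hx 1
  have hintegrator : -x 0 = μ * x 2 := by
    simpa [dguMatrix, mulVec, dotProduct, Fin.sum_univ_three] using congrFun hx 2
  have hβγ := current_add_integrator_eq_zero hC hα hβ hp22 hQx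
  have hβ0 : β ≠ 0 := by
    rintro rfl
    simp [hp22, hγ] at hβ
  have hβα : β * α ≠ γ := by
    intro h
    have hzero : β * σ = 0 := by linear_combination β * hα - p22 * h - hβ
    simp [hβ0, hσ] at hzero
  have hx0 : x 0 = 0 := by
    have hrate : (β * α - γ : ℂ) * x 0 = 0 := by
      linear_combination (μ - β) * hβγ + β * hcurrent + γ * hintegrator
    exact (mul_eq_zero.mp hrate).resolve_left (by exact_mod_cast sub_ne_zero.mpr hβα)
  have hx1 : x 1 = 0 := by simpa [hx0, hC] using hvoltage
  have hx2 : x 2 = 0 := by simpa [hx1, hγ] using hβγ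
  ext k
  fin_cases k
  exacts [hx0, hx1, hx2]

end DGU

section Microgrid

open scoped Kronecker

variable {ι : Type*} [Fintype ι] [DecidableEq ι] {C : ι → ℝ}
  {F P : ι → Matrix (Fin 3) (Fin 3) ℝ} {L : Matrix ι ι ℝ} {σ : ℝ}

/-- The closed-loop matrix of units with local matrices `F i` and terminal capacitances `C i`, from
which the network draws the currents `L *ᵥ v` at the voltages `v`. For lines with conductances
`a i j`, `L` is the weighted Laplacian of `a`. -/
noncomputable def closedLoopMatrix (F : ι → Matrix (Fin 3) (Fin 3) ℝ) (C : ι → ℝ)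
    (L : Matrix ι ι ℝ) : Matrix (ι × Fin 3) (ι × Fin 3) ℝ :=
  nodeBlockDiagonal F - nodeBlockDiagonal (fun i ↦ (C i)⁻¹ • 1) * (L ⊗ₖ E11)

lemma closedLoopMatrix_apply (p q : ι × Fin 3) :
    closedLoopMatrix F C L p q =
      (if p.1 = q.1 then F p.1 p.2 q.2 else 0) - (C p.1)⁻¹ * L p.1 q.1 * E11 p.2 q.2 := by
  simp [closedLoopMatrix, mul_apply, nodeBlockDiagonal_apply, Fintype.sum_prod_type, ite_mul,
    Finset.sum_ite_irrel, one_apply, mul_assoc]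

lemma closedLoopMatrix_weightedLapMatrix_apply {a : ι → ι → ℝ} (ha_diag : ∀ i, a i i = 0)
    (p q : ι × Fin 3) : closedLoopMatrix F C (weightedLapMatrix a) p q =
      if p.1 = q.1 then (F p.1 - (∑ l, a p.1 l / C p.1) • E11) p.2 q.2
      else ((a p.1 q.1 / C p.1) • E11) p.2 q.2 := by
  obtain ⟨i, k⟩ := p
  obtain ⟨j, l⟩ := q
  obtain rfl | hij := eq_or_ne i j
  · simp [closedLoopMatrix_apply, weightedLapMatrix, ha_diag, Finset.mul_sum, div_eq_inv_mul]
  · simp [closedLoopMatrix_apply, weightedLapMatrix, hij, div_eq_inv_mul]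

lemma posSemidef_E11 : E11.PosSemidef := by
  have hdiag : E11 = diagonal ![1, 0, 0] := by
    ext i j
    fin_cases i <;> fin_cases j <;> rfl
  rw [hdiag]
  refine .diagonal fun i ↦ ?_
  fin_cases i <;> simp

lemma structuredLyapunov_mul_E11 (η p22 p23 p33 : ℝ) :
    structuredLyapunov η p22 p23 p33 * E11 = η • E11 := by
  ext i j
  fin_cases i <;> fin_cases j <;> simp [structuredLyapunov, E11]

lemma decoupled_of_closedLoopMatrix_mulVec_eq_smul (hC : ∀ i, C i ≠ 0) (hL : L.PosSemidef)
    (hσ : 0 < σ) (hP : ∀ i, (P i).PosSemidef) (hPE : ∀ i, P i * E11 = (σ * C i) • E11)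
    (hQ : ∀ i, (-lyapunovMatrix (F i) (P i)).PosSemidef) {x : ι × Fin 3 → ℂ} {μ : ℂ}
    (hx : (closedLoopMatrix F C L).map Complex.ofReal *ᵥ x = μ • x) (hμ : 0 ≤ μ.re) (i : ι) :
    (F i).map Complex.ofReal *ᵥ (fun k ↦ x (i, k)) = μ • (fun k ↦ x (i, k)) ∧
      (lyapunovMatrix (F i) (P i)).map Complex.ofReal *ᵥ (fun k ↦ x (i, k)) = 0 := by
  have hQ' : (-lyapunovMatrix (nodeBlockDiagonal F) (nodeBlockDiagonal P)).PosSemidef := by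
    rw [lyapunovMatrix_nodeBlockDiagonal, nodeBlockDiagonal_neg]
    exact posSemidef_nodeBlockDiagonal hQ
  have hcoupling : nodeBlockDiagonal P * nodeBlockDiagonal (fun i ↦ (C i)⁻¹ • 1) * (L ⊗ₖ E11) =
      σ • (L ⊗ₖ E11) := by
    rw [nodeBlockDiagonal_mul, nodeBlockDiagonal_mul_kronecker (T := σ • E11), kronecker_smul]
    intro i
    rw [Matrix.mul_smul, Matrix.mul_one, Matrix.smul_mul, hPE, smul_smul, mul_comm σ,
      inv_mul_cancel_left₀ (hC i)]
  obtain ⟨hFx, hQx⟩ := eigenvector_map_ofReal_of_passive_feedback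
    (posSemidef_nodeBlockDiagonal hP) hQ' (hL.kronecker posSemidef_E11) hσ hcoupling hx hμ
  rw [nodeBlockDiagonal_map _ Complex.ofReal_zero] at hFx
  rw [lyapunovMatrix_nodeBlockDiagonal, nodeBlockDiagonal_map _ Complex.ofReal_zero] at hQx
  constructor <;> ext k
  · rw [← nodeBlockDiagonal_mulVec_apply fun i ↦ (F i).map Complex.ofReal, hFx]
    rfl
  · rw [← nodeBlockDiagonal_mulVec_apply fun i ↦ (lyapunovMatrix (F i) (P i)).map Complex.ofReal,
      hQx]
    rfl

theorem closed_loop_hurwitz_general (hC : ∀ i, C i ≠ 0) {α β γ : ι → ℝ} (hγ : ∀ i, γ i ≠ 0)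
    (hF : ∀ i, F i = dguMatrix (C i) (α i) (β i) (γ i)) (hL : L.PosSemidef) (hσ : 0 < σ)
    {η p22 p23 p33 : ι → ℝ} (hη : ∀ i, η i = σ * C i)
    (hP : ∀ i, P i = structuredLyapunov (η i) (p22 i) (p23 i) (p33 i))
    (hPpsd : ∀ i, (P i).PosSemidef) (hQ : ∀ i, (-lyapunovMatrix (F i) (P i)).PosSemidef) {μ : ℂ}
    (hμ : μ ∈ spectrum ℂ ((closedLoopMatrix F C L).map Complex.ofReal)) : μ.re < 0 := by
  by_contra! hre
  obtain ⟨x, hx0, hx⟩ := exists_mulVec_eq_smul_of_mem_spectrum hμ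
  have hPE (i : ι) : P i * E11 = (σ * C i) • E11 := by
    rw [hP, structuredLyapunov_mul_E11, hη]
  have hnode (i : ι) : (fun k ↦ x (i, k)) = 0 := by
    obtain ⟨hFx, hQx⟩ := decoupled_of_closedLoopMatrix_mulVec_eq_smul hC hL hσ hPpsd hPE hQ hx hre i
    have hPi := hPpsd i
    have hQi := hQ i
    rw [hP, hη] at hPi
    rw [hF, hP, hη] at hQi hQx
    rw [hF] at hFx
    exact dguMatrix_eigenvector_eq_zero (hC i) (hγ i) hσ.ne' hPi hQi hFx hQx
  exact hx0 (funext fun p ↦ congrFun (hnode p.1) p.2)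

end Microgrid

/-- If the electrical graph (with an edge `{i,j}` whenever `a i j > 0`) is
connected, each local matrix `Qᵢ = Fᵢᵀ·Pᵢ + Pᵢ·Fᵢ` is negative semidefinite
(with structured positive definite `Pᵢ` satisfying `ηᵢ = σ̄·Ctᵢ`, `σ̄ > 0`), and
`k3ᵢ ≠ 0` for every `i`, then the closed-loop microgrid matrix `𝐅` is Hurwitz:
every complex eigenvalue of `𝐅` has strictly negative real part. -/
theorem closed_loop_hurwitz
    (N : ℕ) (hN : 1 ≤ N)
    (Rt Lt Ct k1 k2 k3 : Fin N → ℝ)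
    (hRt : ∀ i, 0 < Rt i) (hLt : ∀ i, 0 < Lt i) (hCt : ∀ i, 0 < Ct i)
    (F : Fin N → Matrix (Fin 3) (Fin 3) ℝ)
    (hF : ∀ i, F i = !![0, 1/Ct i, 0;
                        (k1 i - 1)/Lt i, (k2 i - Rt i)/Lt i, k3 i/Lt i;
                        -1, 0, 0])
    (a : Fin N → Fin N → ℝ)
    (ha_symm : ∀ i j, a i j = a j i)
    (ha_nonneg : ∀ i j, 0 ≤ a i j)
    (ha_diag : ∀ i, a i i = 0)
    (hconn : (SimpleGraph.fromRel (fun i j : Fin N => 0 < a i j)).Connected)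
    (σ : ℝ) (hσ : 0 < σ)
    (η p22 p23 p33 : Fin N → ℝ)
    (hη : ∀ i, η i = σ * Ct i)
    (P : Fin N → Matrix (Fin 3) (Fin 3) ℝ)
    (hP : ∀ i, P i = !![η i, 0, 0; 0, p22 i, p23 i; 0, p23 i, p33 i])
    (hPpd : ∀ i, (P i).PosDef)
    (hQ : ∀ i, ∀ v : Fin 3 → ℝ, v ⬝ᵥ ((F i)ᵀ * P i + P i * F i).mulVec v ≤ 0)
    (hk3 : ∀ i, k3 i ≠ 0)
    (bigF : Matrix (Fin N × Fin 3) (Fin N × Fin 3) ℝ)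
    (hbigF : ∀ p q : Fin N × Fin 3, bigF p q =
      if p.1 = q.1 then (F p.1 - (∑ l, a p.1 l / Ct p.1) • E11) p.2 q.2
      else ((a p.1 q.1 / Ct p.1) • E11) p.2 q.2) :
    ∀ μ : ℂ, μ ∈ spectrum ℂ (bigF.map (Complex.ofReal : ℝ → ℂ)) → μ.re < 0 := by
  obtain rfl : bigF = closedLoopMatrix F Ct (weightedLapMatrix a) := by
    ext p q
    rw [hbigF, closedLoopMatrix_weightedLapMatrix_apply ha_diag]
  exact fun μ ↦ closed_loop_hurwitz_general (fun i ↦ (hCt i).ne')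
    (fun i ↦ div_ne_zero (hk3 i) (hLt i).ne') hF
    (posSemidef_weightedLapMatrix ha_symm ha_nonneg) hσ hη hP (fun i ↦ (hPpd i).posSemidef)
    (fun i ↦ posSemidef_neg_lyapunovMatrix (hPpd i).1 (hQ i))
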